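/- arXiv:1206.4497 — 5 statements merged into one kernel-verified Lean document; each statement's English description precedes it below -/
import Mathlib

section
/- Let M, D, A be n×n real matrices with D symmetric, A antisymmetric, and −D + A invertible. If the matrix S := (−D + A)⁻¹ · M is symmetric, then A·Mᵀ + M·A = D·Mᵀ − M·D. -/
open Matrix

/-- Equation (4.1): if `D` is symmetric, `A` is antisymmetric, `-D + A` is invertible,
and `S := (-D + A)⁻¹ * M` is symmetric, then `A * Mᵀ + M * A = D * Mᵀ - M * D`. -/
theorem stmt0 {n : ℕ} (M D A : Matrix (Fin n) (Fin n) ℝ)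
    (hD : Dᵀ = D) (hA : Aᵀ = -A) (hInv : IsUnit (-D + A))
    (hS : ((-D + A)⁻¹ * M)ᵀ = (-D + A)⁻¹ * M) :
    A * Mᵀ + M * A = D * Mᵀ - M * D := by
  have hM : (-D + A) * ((-D + A)⁻¹ * M) = M :=
    Matrix.mul_nonsing_inv_cancel_left _ _ ((Matrix.isUnit_iff_isUnit_det _).mp hInv)
  generalize (-D + A)⁻¹ * M = S at hS hM
  have hMt : Mᵀ = S * (-D - A) := by
    rw [← hM, Matrix.transpose_mul, hS, Matrix.transpose_add, Matrix.transpose_neg, hD, hA,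
      sub_eq_add_neg]
  -- With `B = -D + A` and `M = B * S`, both sides equal `B * S * Bᵀ`.
  have key : (-D + A) * Mᵀ = M * (-D - A) := by
    rw [hMt, ← Matrix.mul_assoc, hM]
  rw [← sub_eq_zero] at key ⊢
  rw [← key]
  noncomm_ring
end

section
/- Let M, D, A be n×n real matrices with D symmetric, A antisymmetric, and −D + A invertible, and suppose S := (−D + A)⁻¹ · M is symmetric and invertible. Then M·S⁻¹ + S⁻¹·Mᵀ = −2·D. -/
open Matrix

/-- Equation (4.2): if `D` is symmetric, `A` is antisymmetric, `-D + A` is invertible,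
and `S := (-D + A)⁻¹ * M` is symmetric and invertible, then
`M * S⁻¹ + S⁻¹ * Mᵀ = -2 • D`. -/
theorem stmt3 {n : ℕ} (M D A : Matrix (Fin n) (Fin n) ℝ)
    (hD : Dᵀ = D) (hA : Aᵀ = -A) (hInv : IsUnit (-D + A))
    (S : Matrix (Fin n) (Fin n) ℝ) (hSdef : S = (-D + A)⁻¹ * M)
    (hS : Sᵀ = S) (hSinv : IsUnit S) :
    M * S⁻¹ + S⁻¹ * Mᵀ = -(2 : ℝ) • D := by
  have hdet := (Matrix.isUnit_iff_isUnit_det _).mp hInv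
  have hSdet := (Matrix.isUnit_iff_isUnit_det _).mp hSinv
  have hM : M = (-D + A) * S := by
    rw [hSdef, Matrix.mul_nonsing_inv_cancel_left _ _ hdet]
  have h1 : M * S⁻¹ = -D + A := by
    rw [hM, Matrix.mul_nonsing_inv_cancel_right _ _ hSdet]
  -- As `S⁻¹` is symmetric, the second summand is the transpose of the first.
  have h2 : S⁻¹ * Mᵀ = -D - A := by
    have h := congrArg Matrix.transpose h1
    rw [Matrix.transpose_mul, Matrix.transpose_nonsing_inv, hS] at h
    rw [h, Matrix.transpose_add, Matrix.transpose_neg, hD, hA, sub_eq_add_neg]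
  rw [h1, h2]
  module
end

section
/- Let D, A, S be n×n real matrices with D symmetric, A antisymmetric, and S symmetric and invertible, set M := (−D + A)·S and M̃ := (−D − A)·S, and let f be a vector in ℝⁿ and λ a nonzero real number with Mᵀ·f = λ·f. Then M̃·(S⁻¹·f) = λ·(S⁻¹·f), and moreover S⁻¹·f = −λ⁻¹·(D + A)·f. -/
open Matrix

/-- If `f` is an eigenvector of `Mᵀ` with nonzero eigenvalue `l`, where
`M = (-D + A) * S`, then `S⁻¹ *ᵥ f` is an eigenvector of `M̃ = (-D - A) * S`
with the same eigenvalue, and `S⁻¹ *ᵥ f = -l⁻¹ • ((D + A) *ᵥ f)`. -/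
theorem stmt12 {n : ℕ} (D A S : Matrix (Fin n) (Fin n) ℝ)
    (hD : Dᵀ = D) (hA : Aᵀ = -A) (hS : Sᵀ = S) (hSinv : IsUnit S)
    (f : Fin n → ℝ) (l : ℝ) (hl : l ≠ 0)
    (hf : ((-D + A) * S)ᵀ.mulVec f = l • f) :
    ((-D - A) * S).mulVec (S⁻¹.mulVec f) = l • (S⁻¹.mulVec f) ∧
      S⁻¹.mulVec f = -l⁻¹ • ((D + A).mulVec f) := by
  have hdet : IsUnit S.det := (Matrix.isUnit_iff_isUnit_det S).mp hSinv
  have hT : ((-D + A) * S)ᵀ = S * (-D - A) := by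
    rw [transpose_mul, transpose_add, transpose_neg, hD, hA, hS, sub_eq_add_neg]
  -- Since `Mᵀ = S (-D - A)`, applying `S⁻¹` to the eigenvalue equation gives both claims.
  have key : (-D - A).mulVec f = l • S⁻¹.mulVec f := by
    rw [← mulVec_smul, ← hf, hT, mulVec_mulVec, nonsing_inv_mul_cancel_left _ _ hdet]
  refine ⟨?_, ?_⟩
  · rw [mulVec_mulVec, mul_nonsing_inv_cancel_right _ _ hdet, key]
  · have h : (D + A).mulVec f = -(l • S⁻¹.mulVec f) := by
      rw [← key, ← neg_mulVec]
      congr 1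
      abel
    rw [h, smul_neg, neg_smul, neg_neg, inv_smul_smul₀ hl]
end

section
/- Let γ, c, β be real numbers with γ ≠ 0, β ≠ 0, and β² − β + c/γ² = 0. Then the function φ(x, v) := (c·x/γ + β·v)²/(2β) satisfies, for all x, v ∈ ℝ, v·(∂φ/∂x)(x,v) − (γ·v + c·x)·(∂φ/∂v)(x,v) + γ·((∂φ/∂v)(x,v))² = 0. -/
/-- The degenerate quasipotential `φ(x, v) = (c·x/γ + β·v)²/(2β)` of equation (6.2)
solves the Freidlin equation (6.1) of the Kramers model with `U(x) = c·x²/2`,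
provided `β² − β + c/γ² = 0`. -/
theorem stmt15 (γ c β : ℝ) (hγ : γ ≠ 0) (hβ : β ≠ 0)
    (hroot : β ^ 2 - β + c / γ ^ 2 = 0) :
    ∀ x v : ℝ,
      v * deriv (fun x' : ℝ => (c * x' / γ + β * v) ^ 2 / (2 * β)) x -
          (γ * v + c * x) * deriv (fun v' : ℝ => (c * x / γ + β * v') ^ 2 / (2 * β)) v +
          γ * (deriv (fun v' : ℝ => (c * x / γ + β * v') ^ 2 / (2 * β)) v) ^ 2 = 0 := by
  intro x v
  -- With `w = c x / γ + β v`, the partial derivatives are `φ_x = (c / (γ β)) w` and `φ_v = w`.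
  have hx : HasDerivAt (fun x' : ℝ => (c * x' / γ + β * v) ^ 2 / (2 * β))
      (c / (γ * β) * (c * x / γ + β * v)) x := by
    have h := (((((hasDerivAt_id' x).const_mul c).div_const γ).add_const
      (β * v)).pow 2).div_const (2 * β)
    refine h.congr_deriv ?_
    simp only [Nat.cast_ofNat, Nat.add_one_sub_one, pow_one, mul_one]
    field_simp
  have hv : HasDerivAt (fun v' : ℝ => (c * x / γ + β * v') ^ 2 / (2 * β))
      (c * x / γ + β * v) v := by
    have h := ((((hasDerivAt_id' v).const_mul β).const_add (c * x / γ)).pow 2).div_const (2 * β)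
    refine h.congr_deriv ?_
    simp only [Nat.cast_ofNat, Nat.add_one_sub_one, pow_one, mul_one]
    field_simp
  rw [hx.deriv, hv.deriv]
  -- The left-hand side factors as `w v (γ / β)` times the quadratic of which `β` is a root.
  have key : v * (c / (γ * β) * (c * x / γ + β * v)) - (γ * v + c * x) * (c * x / γ + β * v) +
      γ * (c * x / γ + β * v) ^ 2 =
      (c * x / γ + β * v) * v * (γ / β) * (β ^ 2 - β + c / γ ^ 2) := by
    field_simp
    ring
  rw [key, hroot, mul_zero]
end

section
/- Let γ, c, β be real numbers with γ ≠ 0, β ≠ 0, and β² − β + c/γ² = 0. Let M be the 2×2 real matrix with rows (0, 1) and (−c, −γ), let D be the 2×2 real matrix with rows (0, 0) and (0, γ), and let S := (1/β) · w·wᵀ where w is the column vector (c/γ, β). Then S·M + Mᵀ·S + 2·S·D·S = 0, and S has rank 1. -/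
/-!
The root condition gives `c = γ² β (1 - β)`, so `w = β u` with `u = (γ (1 - β), 1)`, and
`S = β u uᵀ`. The row vector `uᵀ` is a left eigenvector of the drift matrix with eigenvalue `-γ β`,
so the two linear terms of the Riccati equation sum to `-2 γ β² u uᵀ`; since `uᵀ D u = γ`, the
quadratic term is `2 γ β² u uᵀ`. The rank is at most 1 because `S` factors through a
one-dimensional space, and it is not 0 because the lower right entry of `S` is `β ≠ 0`.
-/

open Matrix

/-- The rank-1 Hessian `S = β⁻¹ • w·wᵀ`, `w = (c/γ, β)`, of the degenerate
quasipotential (6.2) solves the algebraic Riccati equation (4.3) of the Kramers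
model, and has rank 1. -/
theorem stmt19 (γ c β : ℝ) (hγ : γ ≠ 0) (hβ : β ≠ 0)
    (hroot : β ^ 2 - β + c / γ ^ 2 = 0)
    (w : Matrix (Fin 2) (Fin 1) ℝ) (hw : w = !![c / γ; β])
    (S : Matrix (Fin 2) (Fin 2) ℝ) (hS : S = (1 / β) • (w * wᵀ)) :
    S * !![(0 : ℝ), 1; -c, -γ] + (!![(0 : ℝ), 1; -c, -γ])ᵀ * S +
        (2 : ℝ) • (S * !![(0 : ℝ), 0; 0, γ] * S) = 0 ∧
      S.rank = 1 := by
  have hc : c = γ ^ 2 * (β * (1 - β)) := by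
    field_simp at hroot
    linarith
  have hS' : S = !![β * (γ * (1 - β)) ^ 2, β * (γ * (1 - β)); β * (γ * (1 - β)), β] := by
    subst hS hw hc
    ext i j
    fin_cases i <;> fin_cases j <;>
      simp [Matrix.vecMul, dotProduct] <;> field_simp
  constructor
  · rw [hS', hc]
    ext i j
    fin_cases i <;> fin_cases j <;> simp [Matrix.mul_apply, Fin.sum_univ_two] <;> ring
  · apply le_antisymm
    · rw [hS, ← Matrix.smul_mul]
      exact (Matrix.rank_mul_le_left _ _).trans (Matrix.rank_le_width _)
    · rw [Nat.one_le_iff_ne_zero, Ne, Matrix.rank, Submodule.finrank_eq_zero,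
        LinearMap.range_eq_bot]
      intro h
      apply hβ
      simpa [hS'] using congrFun (LinearMap.congr_fun h ![0, 1]) 1
end
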